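/- arXiv:2105.02750 — 4 statements merged into one kernel-verified Lean document; each statement's English description precedes it below -/
import Mathlib

section
/- For every σ ≥ 1, the σ×σ real matrix P with entries P[i,k] = C(σ−i, k−1)/C(σ, k−1) − C(σ−i, k)/C(σ, k) (for 1 ≤ i,k ≤ σ) is invertible; in particular, P[i,k] = 0 whenever k > σ−i+1 and P[i, σ−i+1] = 1/C(σ, σ−i) ≠ 0, so P is anti-triangular with nonzero anti-diagonal. -/
/-!
Read from the bottom row up, the matrix is lower triangular: its row `m` has entries
`C(m, k) / C(σ, k) - C(m, k + 1) / C(σ, k + 1)` for `0 ≤ m, k < σ`, which vanish for `k > m` and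
equal `1 / C(σ, m)` at `k = m`. Reversing the order of the rows does not affect invertibility, and
a triangular matrix with invertible diagonal entries is invertible.
-/

section Triangular

variable {n R : Type*} [Fintype n] [LinearOrder n] [CommRing R]

theorem isUnit_iff_forall_isUnit_diag_of_isLowerTriangular {A : Matrix n n R}
    (hA : A.IsLowerTriangular) : IsUnit A ↔ ∀ i, IsUnit (A i i) := by
  rw [Matrix.isUnit_iff_isUnit_det, Matrix.det_of_isLowerTriangular A hA, IsUnit.prod_univ_iff]

theorem isUnit_iff_of_isLowerTriangular_submatrix {A : Matrix n n R} (e : Equiv.Perm n)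
    (hA : (A.submatrix e id).IsLowerTriangular) : IsUnit A ↔ ∀ i, IsUnit (A (e i) i) := by
  rw [← Matrix.isUnit_submatrix_equiv e (Equiv.refl n)]
  exact isUnit_iff_forall_isUnit_diag_of_isLowerTriangular hA

end Triangular

section FirstHit

variable (K : Type*)

/-- The probability that, in a uniformly random ordering of `n` items of which `m` are unmarked,
the first marked item stands at position `k`, counted from `0`: the first `k` items are all unmarked
with probability `C(m, k) / C(n, k)`, and the first `k + 1` items are not. For `m < n` a vanishing
denominator comes with a vanishing numerator, and `0 / 0 = 0` is then the intended value. -/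
def firstHitProb [DivisionRing K] (n m k : ℕ) : K :=
  (m.choose k : K) / (n.choose k : K) - (m.choose (k + 1) : K) / (n.choose (k + 1) : K)

theorem firstHitProb_eq_zero_of_lt [DivisionRing K] (n : ℕ) {m k : ℕ} (h : m < k) :
    firstHitProb K n m k = 0 := by
  simp [firstHitProb, Nat.choose_eq_zero_of_lt h, Nat.choose_eq_zero_of_lt (h.trans k.lt_succ_self)]

theorem firstHitProb_self [DivisionRing K] (n k : ℕ) :
    firstHitProb K n k k = 1 / (n.choose k : K) := by
  simp [firstHitProb]

theorem one_div_cast_choose_ne_zero [DivisionRing K] [CharZero K] {n k : ℕ} (h : k ≤ n) :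
    (1 : K) / (n.choose k : K) ≠ 0 :=
  one_div_ne_zero (Nat.cast_ne_zero.mpr (Nat.choose_ne_zero h))

/-- The matrix `P` relating the numbers of nodes with `i` children to the profile. Row `i : Fin σ`
stands for nodes with `i + 1` children, so that `i.rev = σ - (i + 1)` of the `σ` items are
unmarked; column `k : Fin σ` stands for a first hit at the `(k + 1)`-st position. -/
def firstHitMatrix [DivisionRing K] (σ : ℕ) : Matrix (Fin σ) (Fin σ) K :=
  Matrix.of fun i k => firstHitProb K σ i.rev k

theorem firstHitMatrix_rev_apply [DivisionRing K] {σ : ℕ} (m k : Fin σ) :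
    firstHitMatrix K σ m.rev k = firstHitProb K σ m k := by
  rw [firstHitMatrix, Matrix.of_apply, Fin.rev_rev]

theorem isLowerTriangular_firstHitMatrix_submatrix_rev [DivisionRing K] (σ : ℕ) :
    ((firstHitMatrix K σ).submatrix Fin.revPerm id).IsLowerTriangular := fun m k hmk =>
  (firstHitMatrix_rev_apply K m k).trans (firstHitProb_eq_zero_of_lt K σ hmk)

theorem isUnit_firstHitMatrix [Field K] [CharZero K] (σ : ℕ) : IsUnit (firstHitMatrix K σ) := by
  rw [isUnit_iff_of_isLowerTriangular_submatrix Fin.revPerm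
    (isLowerTriangular_firstHitMatrix_submatrix_rev K σ)]
  intro k
  rw [Fin.revPerm_apply, firstHitMatrix_rev_apply, firstHitProb_self]
  exact (one_div_cast_choose_ne_zero K k.isLt.le).isUnit

end FirstHit

theorem firstHit_matrix_invertible_general {K : Type*} [Field K] [CharZero K] {σ : ℕ}
    (P : Matrix (Fin σ) (Fin σ) K)
    (hP : ∀ i k : Fin σ,
      P i k = ((σ - ((i : ℕ) + 1)).choose (k : ℕ) : K) / (σ.choose (k : ℕ) : K)
        - ((σ - ((i : ℕ) + 1)).choose ((k : ℕ) + 1) : K) / (σ.choose ((k : ℕ) + 1) : K)) :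
    IsUnit P ∧
      (∀ i k : Fin σ, σ ≤ (i : ℕ) + (k : ℕ) → P i k = 0) ∧
      (∀ i k : Fin σ, (i : ℕ) + (k : ℕ) + 1 = σ →
        P i k = 1 / (σ.choose (k : ℕ) : K) ∧ (1 : K) / (σ.choose (k : ℕ) : K) ≠ 0) := by
  obtain rfl : P = firstHitMatrix K σ := Matrix.ext fun i k => by
    rw [hP, firstHitMatrix, Matrix.of_apply, firstHitProb, Fin.val_rev]
  refine ⟨isUnit_firstHitMatrix K σ, fun i k hik => ?_, fun i k hik => ⟨?_, ?_⟩⟩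
  · have hlt : (i.rev : ℕ) < k := by rw [Fin.val_rev]; lia
    exact firstHitProb_eq_zero_of_lt K σ hlt
  · obtain rfl : i = k.rev := Fin.ext (by rw [Fin.val_rev]; lia)
    rw [firstHitMatrix_rev_apply, firstHitProb_self]
  · exact one_div_cast_choose_ne_zero K k.isLt.le

/-- For every `σ ≥ 1`, the `σ×σ` real matrix `P` with entries
`P[i,k] = C(σ−i,k−1)/C(σ,k−1) − C(σ−i,k)/C(σ,k)` (rows and columns indexed by
`1 ≤ i,k ≤ σ`; here encoded by `Fin σ`, index `i : Fin σ` standing for row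
`(i:ℕ)+1`) is invertible; in particular `P[i,k] = 0` whenever `k > σ−i+1`, and
the anti-diagonal entry `P[i, σ−i+1] = 1/C(σ, σ−i)` is nonzero, so `P` is
anti-triangular with nonzero anti-diagonal. -/
theorem firstHit_matrix_invertible {σ : ℕ} (hσ : 1 ≤ σ)
    (P : Matrix (Fin σ) (Fin σ) ℝ)
    (hP : ∀ i k : Fin σ,
      P i k = ((σ - ((i : ℕ) + 1)).choose (k : ℕ) : ℝ) / (σ.choose (k : ℕ) : ℝ)
        - ((σ - ((i : ℕ) + 1)).choose ((k : ℕ) + 1) : ℝ) / (σ.choose ((k : ℕ) + 1) : ℝ)) :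
    IsUnit P ∧
      (∀ i k : Fin σ, σ ≤ (i : ℕ) + (k : ℕ) → P i k = 0) ∧
      (∀ i k : Fin σ, (i : ℕ) + (k : ℕ) + 1 = σ →
        P i k = 1 / (σ.choose (k : ℕ) : ℝ) ∧ (1 : ℝ) / (σ.choose (k : ℕ) : ℝ) ≠ 0) :=
  firstHit_matrix_invertible_general P hP
end

section
/- Let w be a word of length m and let p, i be integers with 2^i < p ≤ 2^{i+1} and 2p ≤ m. If w[m−2^i+1..m] = w[m−p−2^i+1..m−p] and w[m−p+1..m−p+2^i] = w[m−2p+1..m−2p+2^i], then w[j] = w[j−p] for all j with m−p+1 ≤ j ≤ m; that is, w ends with the square w[m−2p+1..m−p]·w[m−p+1..m] of period p. -/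
/-!
Let `m` be the length of `w`. Its last `p` positions are covered by two windows, the block of length
`ℓ` starting at `m - p` and the last `k` positions, as soon as `p ≤ k + ℓ`. Each matching hypothesis
says that `w` agrees with its shift by `p` on one window, so it does on their union.
For `k = ℓ = 2 ^ i` the covering condition is `p ≤ 2 ^ (i + 1)`.
-/

section

variable {α : Type*} {w : List α} {p s : ℕ}

/-- The word `w` has period `p` on the window `[s, t)` of 0-indexed positions: each letter there
equals the one `p` places earlier. The earlier letters may lie outside the window. The notion is
meant for `p ≤ s`, since `j - p` is truncated. -/
def HasPeriodOn (w : List α) (p s t : ℕ) : Prop :=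
  ∀ j, s ≤ j → j < t → w[j]? = w[j - p]?

theorem hasPeriodOn_add_iff_take_drop_eq {ℓ : ℕ} (hps : p ≤ s) :
    HasPeriodOn w p s (s + ℓ) ↔ (w.drop s).take ℓ = (w.drop (s - p)).take ℓ := by
  constructor
  · intro hw
    refine List.ext_getElem? fun n ↦ ?_
    simp only [List.getElem?_take, List.getElem?_drop]
    split_ifs with hn
    · rw [hw (s + n) (by lia) (by lia), Nat.sub_add_comm hps]
    · rfl
  · intro heq j hsj hjt
    obtain ⟨n, rfl⟩ := Nat.exists_eq_add_of_le hsj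
    have hn : n < ℓ := by lia
    have hletter := congrArg (·[n]?) heq
    simpa only [List.getElem?_take_of_lt hn, List.getElem?_drop, Nat.sub_add_comm hps]
      using hletter

theorem hasPeriodOn_length_iff_drop_eq {k : ℕ} (hpk : p + k ≤ w.length) :
    HasPeriodOn w p (w.length - k) w.length ↔
      w.drop (w.length - k) = (w.drop (w.length - p - k)).take k := by
  have hend : w.length - k + k = w.length := Nat.sub_add_cancel (by lia)
  have htake : (w.drop (w.length - k)).take k = w.drop (w.length - k) :=
    List.take_of_length_le (by rw [List.length_drop]; lia)
  have hblocks := hasPeriodOn_add_iff_take_drop_eq (w := w) (p := p) (s := w.length - k) (ℓ := k)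
    (by lia)
  rwa [hend, htake, Nat.sub_right_comm] at hblocks

namespace HasPeriodOn

theorem union {t₁ s₂ t₂ : ℕ} (hleft : HasPeriodOn w p s t₁) (hright : HasPeriodOn w p s₂ t₂)
    (hoverlap : s₂ ≤ t₁) : HasPeriodOn w p s t₂ := by
  intro j hsj hjt₂
  rcases lt_or_ge j t₁ with hjt₁ | ht₁j
  · exact hleft j hsj hjt₁
  · exact hright j (hoverlap.trans ht₁j) hjt₂

theorem drop_append_drop_suffix (hw : HasPeriodOn w p (w.length - p) w.length)
    (h2p : 2 * p ≤ w.length) :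
    w.drop (w.length - p) ++ w.drop (w.length - p) <:+ w := by
  have hhalves : w.drop (w.length - p) = (w.drop (w.length - p - p)).take p :=
    (hasPeriodOn_length_iff_drop_eq (by lia)).mp hw
  have hsquare : w.drop (w.length - p) ++ w.drop (w.length - p) = w.drop (w.length - p - p) :=
    calc
      _ = (w.drop (w.length - p - p)).take p ++ (w.drop (w.length - p - p)).drop p := by
        rw [← hhalves, List.drop_drop, Nat.sub_add_cancel (by lia)]
      _ = _ := List.take_append_drop _ _
  exact hsquare ▸ List.drop_suffix _ _

end HasPeriodOn

theorem online_square_detection_general {k ℓ : ℕ} (hcover : p ≤ k + ℓ)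
    (hpk : p + k ≤ w.length) (h2p : 2 * p ≤ w.length)
    (hlast : w.drop (w.length - k) = (w.drop (w.length - p - k)).take k)
    (hfirst : (w.drop (w.length - p)).take ℓ = (w.drop (w.length - 2 * p)).take ℓ) :
    (∀ j : ℕ, w.length - p ≤ j → j < w.length → w[j]? = w[j - p]?) ∧
      ∃ v : List α, v.length = p ∧ (v ++ v) <:+ w := by
  have hperiod_first : HasPeriodOn w p (w.length - p) (w.length - p + ℓ) := by
    rwa [hasPeriodOn_add_iff_take_drop_eq (by lia), Nat.sub_sub, ← two_mul]
  have hperiod_last : HasPeriodOn w p (w.length - k) w.length :=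
    (hasPeriodOn_length_iff_drop_eq hpk).mpr hlast
  have hperiod : HasPeriodOn w p (w.length - p) w.length :=
    hperiod_first.union hperiod_last (by lia)
  exact ⟨hperiod, w.drop (w.length - p), by rw [List.length_drop]; lia,
    hperiod.drop_append_drop_suffix h2p⟩

end

/-- (Correctness of the online square detection step.) Let `w` be a word of
length `m` and `p, i` integers with `2^i < p ≤ 2^{i+1}` and `2p ≤ m`. If the
length-`2^i` suffix of `w` equals the length-`2^i` block ending at position
`m − p` (1-indexed: `w[m−2^i+1..m] = w[m−p−2^i+1..m−p]`) and
`w[m−p+1..m−p+2^i] = w[m−2p+1..m−2p+2^i]`, then `w[j] = w[j−p]` for all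
`m−p+1 ≤ j ≤ m` (0-indexed below: `w[j]? = w[j−p]?` for `m−p ≤ j < m`); that
is, `w` ends with a square of period `p`. -/
theorem online_square_detection {α : Type*} (w : List α) (m p i : ℕ)
    (hm : w.length = m) (hp1 : 2 ^ i < p) (hp2 : p ≤ 2 ^ (i + 1)) (h2p : 2 * p ≤ m)
    (h1 : w.drop (m - 2 ^ i) = (w.drop (m - p - 2 ^ i)).take (2 ^ i))
    (h2 : (w.drop (m - p)).take (2 ^ i) = (w.drop (m - 2 * p)).take (2 ^ i)) :
    (∀ j : ℕ, m - p ≤ j → j < m → w[j]? = w[j - p]?) ∧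
      ∃ v : List α, v.length = p ∧ (v ++ v) <:+ w := by
  subst hm
  exact online_square_detection_general (by lia) (by lia) h2p h1 h2
end

section
/- Let w be a word over an alphabet Σ, written as w = u·z with z a suffix of w, and suppose there is a letter a ∈ Σ that occurs strictly more times in z than in u. Then w has no suffix that is an Abelian square vv′ with |v| = |v′| ≥ |z|; that is, for every factorization w = x·v·v′ with |v| = |v′| ≥ |z|, the Parikh vectors of v and v′ differ. -/
section CountP

variable {α : Type*} {u z x v v' : List α} {p : α → Bool}

-- Lengthening the suffix of a fixed word only moves letters from the left part to the right part.
theorem countP_lt_countP_of_append_eq_append (h : u ++ z = v ++ v')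
    (hlen : z.length ≤ v'.length) (hp : u.countP p < z.countP p) :
    v.countP p < v'.countP p := by
  have z_suffix : z <:+ v' :=
    List.suffix_of_suffix_length_le (List.suffix_append u z) (h ▸ List.suffix_append v v') hlen
  have v_prefix : v <+: u := by
    have total_length := congrArg List.length h
    simp only [List.length_append] at total_length
    exact List.prefix_of_prefix_length_le (h ▸ List.prefix_append v v')
      (List.prefix_append u z) (by omega)
  calc v.countP p
    _ ≤ u.countP p := v_prefix.sublist.countP_le
    _ < z.countP p := hp
    _ ≤ v'.countP p := z_suffix.sublist.countP_le

theorem no_long_abelian_square_suffix_general (hp : u.countP p < z.countP p)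
    (h : u ++ z = x ++ v ++ v') (hlen : z.length ≤ v'.length) :
    v.countP p < v'.countP p :=
  calc v.countP p
    _ ≤ (x ++ v).countP p := (List.sublist_append_right x v).countP_le
    _ < v'.countP p := countP_lt_countP_of_append_eq_append h hlen hp

end CountP

/-- (Early termination in online Abelian-square detection.) Let `w = u · z` and
suppose some letter `a` occurs strictly more times in the suffix `z` than in
`u`. Then `w` has no suffix that is an Abelian square `v·v′` with
`|v| = |v′| ≥ |z|`: for every factorization `w = x · v · v′` with
`|v| = |v′| ≥ |z|`, the Parikh vectors of `v` and `v′` differ, i.e. some letter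
occurs a different number of times in `v` and in `v′`. -/
theorem no_long_abelian_square_suffix {α : Type*} [DecidableEq α]
    (u z : List α) (a : α) (ha : u.count a < z.count a) :
    ∀ x v v' : List α, u ++ z = x ++ v ++ v' → v.length = v'.length →
      z.length ≤ v.length → ∃ b : α, v.count b ≠ v'.count b :=
  fun _ _ _ h hlen hz =>
    ⟨a, (no_long_abelian_square_suffix_general ha h (hlen ▸ hz)).ne⟩
end

section
/- For an infinite factorial language L over a finite alphabet Σ, the Markov entropy does not exceed the general entropy: μ(L) ≤ H(L) = log₂ gr(L), where gr(L) = lim_{n→∞} (C_L(n))^{1/n}. -/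
open Filter

/-- A language is factorial if it contains every factor (contiguous subword,
i.e. infix) of each of its elements. -/
def IsFactorial {α : Type*} (L : Set (List α)) : Prop :=
  ∀ v ∈ L, ∀ u : List α, u <:+: v → u ∈ L

/-- Combinatorial complexity: the number of words of length `n` in `L`. -/
noncomputable def wordCount {α : Type*} (L : Set (List α)) (n : ℕ) : ℕ :=
  {w : List α | w ∈ L ∧ w.length = n}.ncard

/-- `chn L n u` is the number of letters `a` such that `u ++ [a]` is a prefix of
some length-`n` word of `L`. -/
noncomputable def chn {α : Type*} (L : Set (List α)) (n : ℕ) (u : List α) : ℕ :=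
  {a : α | ∃ w ∈ L, w.length = n ∧ (u ++ [a]) <+: w}.ncard

/-- `P_[n](w) = ∏_{i=0}^{n-1} 1 / ch_[n](w[1..i])`. -/
noncomputable def Pn {α : Type*} (L : Set (List α)) (n : ℕ) (w : List α) : ℝ :=
  ∏ i ∈ Finset.range n, (1 : ℝ) / (chn L n (w.take i) : ℝ)

/-- `H(η_n) = −Σ_{w ∈ L, |w|=n} P_[n](w)·log₂ P_[n](w)`. -/
noncomputable def Hη {α : Type*} (L : Set (List α)) (n : ℕ) : ℝ :=
  -∑ᶠ w ∈ {w : List α | w ∈ L ∧ w.length = n}, Pn L n w * Real.logb 2 (Pn L n w)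

/-!
The weights `P_[n]` describe a random walk down the trie of length-`n` words of `L` that picks
uniformly among the available children at every vertex. Since each length-`n` word is a leaf at
depth `n` and no vertex above the leaves is a dead end, these weights sum to `1`. A distribution
on `C_L(n)` points has entropy at most `log₂ C_L(n)`; dividing by `n` and letting `n → ∞` gives
the claim.
-/

open Real Set Topology

theorem sum_negMulLog_le_log_card {ι : Type*} (s : Finset ι) (p : ι → ℝ)
    (hp : ∀ i ∈ s, 0 ≤ p i) (hsum : ∑ i ∈ s, p i = 1) :
    ∑ i ∈ s, negMulLog (p i) ≤ log s.card := by
  have hs : s.Nonempty := Finset.nonempty_of_sum_ne_zero (hsum.trans_ne one_ne_zero)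
  have hcard : (0 : ℝ) < s.card := mod_cast hs.card_pos
  have jensen : ∑ i ∈ s, (s.card : ℝ)⁻¹ • negMulLog (p i) ≤
      negMulLog (∑ i ∈ s, (s.card : ℝ)⁻¹ • p i) :=
    concaveOn_negMulLog.le_map_sum (fun _ _ ↦ by positivity) (by simp [hcard.ne']) hp
  have uniform : negMulLog (s.card : ℝ)⁻¹ = (s.card : ℝ)⁻¹ * log s.card := by
    rw [negMulLog, log_inv, neg_mul_neg]
  rw [← Finset.smul_sum, ← Finset.smul_sum, hsum, smul_eq_mul, smul_eq_mul, mul_one,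
    uniform] at jensen
  exact le_of_mul_le_mul_left jensen (inv_pos.2 hcard)

section Words

variable {α : Type*} {L : Set (List α)} {n : ℕ} {a : α}

/-- The set of words of length `n` in `L`, the index set of the sum in `Hη L n`. -/
def wordsOfLength (L : Set (List α)) (n : ℕ) : Set (List α) :=
  {w | w ∈ L ∧ w.length = n}

/-- The letters that begin some word of length `n` in `L`, i.e. the children of the root in the
trie of these words. -/
def firstLetters (L : Set (List α)) (n : ℕ) : Set α :=
  {a | ∃ w, a :: w ∈ wordsOfLength L n}

theorem wordCount_ne_zero_iff :
    wordCount L n ≠ 0 ↔ (wordsOfLength L n).Finite ∧ (wordsOfLength L n).Nonempty :=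
  ⟨fun h ↦ ⟨finite_of_ncard_ne_zero h, nonempty_of_ncard_ne_zero h⟩,
    fun ⟨hfin, hne⟩ ↦ ((ncard_pos hfin).2 hne).ne'⟩

theorem wordsOfLength_finite [Finite α] (L : Set (List α)) (n : ℕ) : (wordsOfLength L n).Finite :=
  (List.finite_length_eq α n).subset fun _ hw ↦ hw.2

theorem IsFactorial.wordsOfLength_nonempty [Finite α] (hL : IsFactorial L) (hInf : L.Infinite)
    (n : ℕ) : (wordsOfLength L n).Nonempty := by
  obtain ⟨w, hwL, hlen⟩ := hInf.exists_notMem_finite (List.finite_length_lt α n)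
  have hle : n ≤ w.length := not_lt.1 hlen
  exact ⟨w.take n, hL w hwL _ (List.take_prefix n w).isInfix, List.length_take_of_le hle⟩

theorem wordsOfLength_zero_of_nonempty (hne : (wordsOfLength L 0).Nonempty) :
    wordsOfLength L 0 = {[]} :=
  hne.subset_singleton_iff.1 fun _ hw ↦ List.length_eq_zero_iff.1 hw.2

theorem cons_mem_wordsOfLength_succ {w : List α} :
    a :: w ∈ wordsOfLength L (n + 1) ↔ w ∈ wordsOfLength (List.cons a ⁻¹' L) n :=
  and_congr Iff.rfl Nat.succ_inj

theorem mem_firstLetters_succ :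
    a ∈ firstLetters L (n + 1) ↔ (wordsOfLength (List.cons a ⁻¹' L) n).Nonempty :=
  exists_congr fun _ ↦ cons_mem_wordsOfLength_succ

theorem firstLetters_finite (hfin : (wordsOfLength L n).Finite) : (firstLetters L n).Finite :=
  ((hfin.image List.head?).preimage (Option.some_injective α).injOn).subset
    fun a ⟨w, hw⟩ ↦ ⟨a :: w, hw, rfl⟩

theorem firstLetters_succ_nonempty (hne : (wordsOfLength L (n + 1)).Nonempty) :
    (firstLetters L (n + 1)).Nonempty := by
  obtain ⟨w, hw⟩ := hne
  obtain ⟨a, v, rfl⟩ := List.exists_cons_of_length_eq_add_one hw.2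
  exact ⟨a, v, hw⟩

theorem wordsOfLength_preimage_cons_finite (hfin : (wordsOfLength L (n + 1)).Finite) (a : α) :
    (wordsOfLength (List.cons a ⁻¹' L) n).Finite :=
  (hfin.preimage List.cons_injective.injOn).subset fun _ ↦ cons_mem_wordsOfLength_succ.2

theorem wordsOfLength_succ_eq_biUnion (L : Set (List α)) (n : ℕ) :
    wordsOfLength L (n + 1) =
      ⋃ a ∈ firstLetters L (n + 1), List.cons a '' wordsOfLength (List.cons a ⁻¹' L) n := by
  ext w
  simp only [mem_iUnion, mem_image, exists_prop]
  constructor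
  · intro hw
    obtain ⟨a, v, rfl⟩ := List.exists_cons_of_length_eq_add_one hw.2
    exact ⟨a, ⟨v, hw⟩, v, cons_mem_wordsOfLength_succ.1 hw, rfl⟩
  · rintro ⟨a, -, v, hv, rfl⟩
    exact cons_mem_wordsOfLength_succ.2 hv

theorem finsum_mem_wordsOfLength_succ {M : Type*} [AddCommMonoid M]
    (hfin : (wordsOfLength L (n + 1)).Finite) (f : List α → M) :
    ∑ᶠ w ∈ wordsOfLength L (n + 1), f w =
      ∑ᶠ a ∈ firstLetters L (n + 1), ∑ᶠ w ∈ wordsOfLength (List.cons a ⁻¹' L) n, f (a :: w) := by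
  have hdisj : (firstLetters L (n + 1)).PairwiseDisjoint
      fun a ↦ List.cons a '' wordsOfLength (List.cons a ⁻¹' L) n := by
    rintro a - b - hab
    refine disjoint_left.2 ?_
    rintro _ ⟨v, -, rfl⟩ ⟨w, -, hvw⟩
    exact hab (List.cons.inj hvw).1.symm
  rw [wordsOfLength_succ_eq_biUnion, finsum_mem_biUnion hdisj (firstLetters_finite hfin)
    fun a _ ↦ (wordsOfLength_preimage_cons_finite hfin a).image _]
  exact finsum_mem_congr rfl fun a _ ↦ finsum_mem_image List.cons_injective.injOn

theorem chn_nil (L : Set (List α)) (n : ℕ) : chn L n [] = (firstLetters L n).ncard := by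
  refine congrArg Set.ncard (Set.ext fun a ↦ ⟨?_, ?_⟩)
  · rintro ⟨w, hwL, hlen, v, rfl⟩
    exact ⟨v, hwL, hlen⟩
  · rintro ⟨v, hvL, hlen⟩
    exact ⟨a :: v, hvL, hlen, v, rfl⟩

theorem chn_cons (L : Set (List α)) (n : ℕ) (a : α) (u : List α) :
    chn L (n + 1) (a :: u) = chn (List.cons a ⁻¹' L) n u := by
  refine congrArg Set.ncard (Set.ext fun b ↦ ⟨?_, ?_⟩)
  · rintro ⟨w, hwL, hlen, v, rfl⟩
    exact ⟨u ++ [b] ++ v, hwL, Nat.succ_inj.1 hlen, v, rfl⟩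
  · rintro ⟨w, hwL, hlen, v, rfl⟩
    exact ⟨a :: (u ++ [b] ++ v), hwL, congrArg Nat.succ hlen, v, rfl⟩

theorem Pn_cons (L : Set (List α)) (n : ℕ) (a : α) (w : List α) :
    Pn L (n + 1) (a :: w) =
      ((firstLetters L (n + 1)).ncard : ℝ)⁻¹ * Pn (List.cons a ⁻¹' L) n w := by
  simp only [Pn, Finset.prod_range_succ', List.take_succ_cons, List.take_zero, chn_cons, chn_nil,
    one_div, mul_comm]

theorem Pn_nonneg (L : Set (List α)) (n : ℕ) (w : List α) : 0 ≤ Pn L n w :=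
  Finset.prod_nonneg fun _ _ ↦ by positivity

-- Splitting off the first letter reduces the claim to the languages `{w | a :: w ∈ L}`.
theorem finsum_Pn_eq_one (hfin : (wordsOfLength L n).Finite) (hne : (wordsOfLength L n).Nonempty) :
    ∑ᶠ w ∈ wordsOfLength L n, Pn L n w = 1 := by
  induction n generalizing L with
  | zero =>
    rw [wordsOfLength_zero_of_nonempty hne, finsum_mem_singleton, Pn, Finset.prod_range_zero]
  | succ n ih =>
    have hA := firstLetters_finite hfin
    have hcard : ((firstLetters L (n + 1)).ncard : ℝ) ≠ 0 :=
      Nat.cast_ne_zero.2 ((ncard_pos hA).2 (firstLetters_succ_nonempty hne)).ne'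
    calc ∑ᶠ w ∈ wordsOfLength L (n + 1), Pn L (n + 1) w
      _ = ∑ᶠ a ∈ firstLetters L (n + 1), ∑ᶠ w ∈ wordsOfLength (List.cons a ⁻¹' L) n,
            ((firstLetters L (n + 1)).ncard : ℝ)⁻¹ * Pn (List.cons a ⁻¹' L) n w := by
          simp only [finsum_mem_wordsOfLength_succ hfin, Pn_cons]
      _ = ∑ᶠ a ∈ firstLetters L (n + 1), ((firstLetters L (n + 1)).ncard : ℝ)⁻¹ :=
          finsum_mem_congr rfl fun a ha ↦ by
            rw [← mul_finsum_mem, ih (wordsOfLength_preimage_cons_finite hfin a)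
              (mem_firstLetters_succ.1 ha), mul_one]
      _ = 1 := by
          rw [finsum_mem_eq_finite_toFinset_sum _ hA, Finset.sum_const, nsmul_eq_mul,
            ← ncard_eq_toFinset_card _ hA, mul_inv_cancel₀ hcard]

theorem Hη_eq_finsum_negMulLog_div (L : Set (List α)) (n : ℕ) :
    Hη L n = (∑ᶠ w ∈ wordsOfLength L n, negMulLog (Pn L n w)) / log 2 := by
  rw [Hη, div_eq_mul_inv, finsum_mem_mul, neg_eq_neg_one_mul, mul_finsum_mem]
  exact finsum_mem_congr rfl fun w _ ↦ by rw [negMulLog, logb]; ring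

theorem Hη_le_logb_wordCount (h : wordCount L n ≠ 0) : Hη L n ≤ logb 2 (wordCount L n) := by
  obtain ⟨hfin, hne⟩ := wordCount_ne_zero_iff.1 h
  have hsum := finsum_Pn_eq_one hfin hne
  have hcard : wordCount L n = hfin.toFinset.card := ncard_eq_toFinset_card _ hfin
  rw [finsum_mem_eq_finite_toFinset_sum _ hfin] at hsum
  rw [Hη_eq_finsum_negMulLog_div, finsum_mem_eq_finite_toFinset_sum _ hfin, logb, hcard]
  gcongr
  exact sum_negMulLog_le_log_card _ _ (fun w _ ↦ Pn_nonneg L n w) hsum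

theorem Hη_div_le_logb_wordCount_rpow (h : wordCount L n ≠ 0) :
    Hη L n / n ≤ logb 2 ((wordCount L n : ℝ) ^ (1 / (n : ℝ))) := by
  rw [logb_rpow_eq_mul_logb_of_pos (by positivity), one_div_mul_eq_div]
  gcongr
  exact Hη_le_logb_wordCount h

end Words

theorem markovEntropy_le_log_growthRate_general {α : Type*} (L : Set (List α))
    (hcount : ∃ᶠ n in atTop, wordCount L n ≠ 0) (μ gr : ℝ)
    (hμ : Tendsto (fun n : ℕ ↦ Hη L n / (n : ℝ)) atTop (𝓝 μ))
    (hgr : Tendsto (fun n : ℕ ↦ (wordCount L n : ℝ) ^ (1 / (n : ℝ))) atTop (𝓝 gr)) :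
    μ ≤ logb 2 gr := by
  have one_le_gr : 1 ≤ gr := ge_of_tendsto_of_frequently hgr <| hcount.mono fun n hn ↦
    one_le_rpow (mod_cast Nat.one_le_iff_ne_zero.2 hn) (by positivity)
  exact le_of_tendsto_of_tendsto_of_frequently hμ (hgr.logb (zero_lt_one.trans_le one_le_gr).ne') <|
    hcount.mono fun n ↦ Hη_div_le_logb_wordCount_rpow

/-- For an infinite factorial language `L` over a finite alphabet, the Markov
entropy `μ(L) = lim_{n→∞} H(η_n)/n` does not exceed the general entropy
`H(L) = log₂ gr(L)`, where `gr(L) = lim_{n→∞} C_L(n)^{1/n}`. -/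
theorem markovEntropy_le_log_growthRate {α : Type*} [Fintype α]
    (L : Set (List α)) (hL : IsFactorial L) (hInf : L.Infinite)
    (μ gr : ℝ)
    (hμ : Tendsto (fun n : ℕ => Hη L n / (n : ℝ)) atTop (nhds μ))
    (hgr : Tendsto (fun n : ℕ => (wordCount L n : ℝ) ^ (1 / (n : ℝ))) atTop (nhds gr)) :
    μ ≤ Real.logb 2 gr :=
  markovEntropy_le_log_growthRate_general L (.of_forall fun n ↦ wordCount_ne_zero_iff.2
    ⟨wordsOfLength_finite L n, hL.wordsOfLength_nonempty hInf n⟩) μ gr hμ hgr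
end
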